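/- Let r ≥ 1 be an integer and λ(p; s) = p^r + Σ_{i=1}^{r−1} s_i p^{r−1−i} a polynomial in p with coefficients s = (s_1, …, s_{r−1}). Let p(ξ; s) = ξ + Σ_{k≥1} u_k(s) ξ^{−k} be the unique formal solution in ξ + ℚ[s][[ξ^{−1}]] of λ(p; s) = ξ^r. Then for every k ≥ 1, k·u_k(s) = −Σ_{n_1,…,n_{r−1} ≥ 0, 2n_1 + 3n_2 + ⋯ + r·n_{r−1} = k+1} binom(k/r, Σ_i n_i)·multinomial(Σ_i n_i; n_1,…,n_{r−1})·s_1^{n_1}⋯s_{r−1}^{n_{r−1}}, where binom(k/r, j) = (k/r)(k/r − 1)⋯(k/r − j + 1)/j! is a generalized binomial coefficient. -/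

import Mathlib

/-- Generalized binomial coefficient `binom(q,d) = q(q-1)⋯(q-d+1)/d!` for `q ∈ ℚ`. -/
def qbinom (q : ℚ) (d : ℕ) : ℚ :=
  (∏ i ∈ Finset.range d, (q - (i : ℚ))) / (d.factorial : ℚ)

/-!
Let `η = ξ⁻¹` and `x = p⁻¹`. Dividing `λ(p; s) = ξ ^ r` by `p ^ r` gives `x = η * V` with
`V ^ r = 1 + ∑ i, s i * x ^ (i + 1)`. By Lagrange inversion, that is, by the change of variable
`η ↦ x` in a residue, `k * u_k` is the opposite of the coefficient of `x ^ (k + 1)` in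
`V ^ k = (1 + ∑ i, s i * x ^ (i + 1)) ^ (k / r)`, which the binomial and multinomial
formulas expand.
-/

lemma qbinom_eq_choose (q : ℚ) (d : ℕ) : qbinom q d = Ring.choose q d := by
  have hprod : ∏ i ∈ Finset.range d, (q - (i : ℚ)) = (descPochhammer ℤ d).smeval q := by
    induction d with
    | zero => simp
    | succ d ih =>
      simp [Finset.prod_range_succ, ih, descPochhammer_succ_right, Polynomial.smeval_mul,
        Polynomial.smeval_sub, Polynomial.smeval_natCast]
  rw [Ring.choose_eq_smul, qbinom, hprod, div_eq_inv_mul, smul_eq_mul]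

lemma finsum_sum_filter_eq {α β M : Type*} [DecidableEq β] [AddCommMonoid M] (S : Finset α)
    (g : α → β) (f : β → α → M) :
    ∑ᶠ b, ∑ a ∈ S with g a = b, f b a = ∑ a ∈ S, f (g a) a := by
  have hsupp : (Function.support fun b ↦ ∑ a ∈ S with g a = b, f b a) ⊆ S.image g := by
    intro b hb
    obtain ⟨a, ha, -⟩ := Finset.exists_ne_zero_of_sum_ne_zero hb
    rw [Finset.mem_filter] at ha
    exact Finset.mem_coe.mpr (Finset.mem_image.mpr ⟨a, ha⟩)
  rw [finsum_eq_sum_of_support_subset _ hsupp,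
    ← Finset.sum_fiberwise_of_maps_to fun a ha ↦ Finset.mem_image_of_mem g ha]
  refine Finset.sum_congr rfl fun b _ ↦ Finset.sum_congr rfl fun a ha ↦ ?_
  rw [(Finset.mem_filter.mp ha).2]

section TuplesOfWeight

variable {ι : Type*} [Fintype ι] [DecidableEq ι]

/-- The families `n : ι → ℕ` of weight `∑ i, w i * n i = N`, which index the monomials of weighted
degree `N`. Entries are bounded by `N` to have a finite set; this loses no family as long as all
`w i` are nonzero. -/
def tuplesOfWeight (w : ι → ℕ) (N : ℕ) : Finset (ι → ℕ) :=
  (Fintype.piFinset fun _ ↦ Finset.range (N + 1)).filter fun n ↦ ∑ i, w i * n i = N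

lemma mem_tuplesOfWeight {w : ι → ℕ} (hw : ∀ i, w i ≠ 0) {N : ℕ} {n : ι → ℕ} :
    n ∈ tuplesOfWeight w N ↔ ∑ i, w i * n i = N := by
  simp only [tuplesOfWeight, Finset.mem_filter, Fintype.mem_piFinset, Finset.mem_range,
    and_iff_right_iff_imp, Nat.lt_succ_iff]
  rintro rfl i
  calc n i ≤ w i * n i := Nat.le_mul_of_pos_left _ (Nat.pos_of_ne_zero (hw i))
    _ ≤ ∑ j, w j * n j :=
      Finset.single_le_sum (f := fun j ↦ w j * n j) (fun _ _ ↦ Nat.zero_le _) (Finset.mem_univ i)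

end TuplesOfWeight

section PowerSeries

open PowerSeries

section Residue

variable {A : Type*} [CommRing A]

/-- `X ^ (-j - 2) * U ^ j * (U - X * U')` is the derivative of `-(U / X) ^ (j + 1) / (j + 1)`, so
its residue vanishes. -/
lemma coeff_succ_pow_mul_sub_X_mul_derivative [IsAddTorsionFree A] (U : A⟦X⟧) (j : ℕ) :
    coeff (j + 1) (U ^ j * (U - X * d⁄dX A U)) = 0 := by
  have hsplit : U ^ j * (U - X * d⁄dX A U) = U ^ (j + 1) - X * (U ^ j * d⁄dX A U) := by ring
  have hderiv : coeff (j + 1) (U ^ (j + 1)) * (j + 1) = (j + 1) * coeff j (U ^ j * d⁄dX A U) := by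
    rw [← coeff_derivative, derivative_pow, Nat.add_sub_cancel, mul_assoc,
      ← map_natCast (C (R := A)), coeff_C_mul, Nat.cast_succ]
  refine (smul_eq_zero_iff_right j.succ_ne_zero).mp ?_
  rw [hsplit, map_sub, coeff_succ_X_mul, nsmul_eq_mul, Nat.cast_succ, mul_sub, ← hderiv, mul_comm,
    sub_self]

lemma coeff_succ_pow_mul_X_mul_pow_mul_sub [IsAddTorsionFree A] {U V : A⟦X⟧} (hUV : U * V = 1)
    (k m : ℕ) :
    coeff (k + 1) (U ^ k * (X * V) ^ m * (U - X * d⁄dX A U)) = if m = k + 1 then 1 else 0 := by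
  have hshift : U ^ k * (X * V) ^ m * (U - X * d⁄dX A U) =
      X ^ m * (U ^ k * V ^ m * (U - X * d⁄dX A U)) := by ring
  rw [hshift, coeff_X_pow_mul']
  rcases lt_trichotomy m (k + 1) with hm | rfl | hm
  · obtain ⟨j, rfl⟩ := Nat.exists_eq_add_of_le (Nat.lt_succ_iff.mp hm)
    have hcancel : U ^ (m + j) * V ^ m = U ^ j := by
      rw [pow_add, mul_right_comm, ← mul_pow, hUV, one_pow, one_mul]
    rw [if_pos hm.le, if_neg hm.ne, hcancel, show m + j + 1 - m = j + 1 by lia,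
      coeff_succ_pow_mul_sub_X_mul_derivative]
  · have hcancel : U ^ k * V ^ (k + 1) * U = 1 := by
      rw [mul_right_comm, ← pow_succ, ← mul_pow, hUV, one_pow]
    simp [mul_sub, hcancel]
  · rw [if_neg (by lia), if_neg (by lia)]

lemma subst_eq_sum_range_add_pow_mul {a : A⟦X⟧} (ha : HasSubst a) (f : A⟦X⟧) (N : ℕ) :
    f.subst a = ∑ d ∈ Finset.range N, C (coeff d f) * a ^ d +
      a ^ N * (mk fun i ↦ coeff (i + N) f).subst a := by
  conv_lhs => rw [eq_X_pow_mul_shift_add_trunc N f, subst_add ha, subst_mul ha, subst_pow ha,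
    subst_X ha, subst_coe ha, trunc_apply, map_sum, add_comm, ← Finset.range_eq_Ico]
  simp only [Polynomial.aeval_monomial]
  rfl

/-- Invariance of the residue of `f / X ^ (k + 2)` under the change of variable `X ↦ X / U`. -/
lemma coeff_succ_pow_mul_subst_mul_sub [IsAddTorsionFree A] {U V : A⟦X⟧} (hUV : U * V = 1)
    (f : A⟦X⟧) (k : ℕ) :
    coeff (k + 1) (U ^ k * f.subst (X * V) * (U - X * d⁄dX A U)) = coeff (k + 1) f := by
  set D := U - X * d⁄dX A U
  set g := (mk fun i ↦ coeff (i + (k + 2)) f).subst (X * V)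
  have hXV : HasSubst (X * V) := .of_constantCoeff_zero' (by simp)
  have hexpand : U ^ k * f.subst (X * V) * D =
      ∑ d ∈ Finset.range (k + 2), C (coeff d f) * (U ^ k * (X * V) ^ d * D) +
        X ^ (k + 2) * (U ^ k * V ^ (k + 2) * g * D) := by
    rw [subst_eq_sum_range_add_pow_mul hXV f (k + 2), mul_add, add_mul, Finset.mul_sum,
      Finset.sum_mul]
    congr 1
    · exact Finset.sum_congr rfl fun d _ ↦ by ring
    · ring
  rw [hexpand, map_add, map_sum, coeff_X_pow_mul', if_neg (by lia), add_zero]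
  simp only [coeff_C_mul, D, coeff_succ_pow_mul_X_mul_pow_mul_sub hUV, mul_ite, mul_one, mul_zero]
  rw [Finset.sum_ite_eq', if_pos (Finset.mem_range.mpr (by lia))]

/-- With `x = X * V = X / U`, this is Lagrange's formula for the coefficients of `1 / x`. -/
theorem lagrange_inversion_reciprocal [IsAddTorsionFree A] {U V f : A⟦X⟧} (hUV : U * V = 1) {k : ℕ}
    (hf : f.subst (X * V) = V ^ k) :
    (k : A) * coeff (k + 1) U = -coeff (k + 1) f := by
  have hcancel : U ^ k * V ^ k = 1 := by rw [← mul_pow, hUV, one_pow]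
  rw [← coeff_succ_pow_mul_subst_mul_sub hUV f k, hf, hcancel, one_mul, map_sub, coeff_succ_X_mul,
    coeff_derivative]
  ring

end Residue

section OneAddPow

lemma eq_of_pow_eq_pow_of_constantCoeff_eq_one {A : Type*} [CommRing A] [IsAddTorsionFree A]
    {f g : A⟦X⟧} (hf : constantCoeff f = 1) (hg : constantCoeff g = 1) {r : ℕ} (hr : r ≠ 0)
    (h : f ^ r = g ^ r) : f = g := by
  set S := ∑ i ∈ Finset.range r, f ^ i * g ^ (r - 1 - i)
  have hprod : S * (f - g) = 0 := by rw [(Commute.all f g).geom_sum₂_mul, h, sub_self]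
  have hS : constantCoeff S = r := by simp [S, hf, hg]
  have hreg : S ∈ nonZeroDivisors A⟦X⟧ := by
    refine MvPowerSeries.mem_nonZeroDivisors_of_constantCoeff ?_
    change constantCoeff S ∈ nonZeroDivisors A
    rw [hS, mem_nonZeroDivisors_iff_right]
    intro a ha
    rwa [mul_comm, ← nsmul_eq_mul, smul_eq_zero_iff_right hr] at ha
  exact sub_eq_zero.mp ((mem_nonZeroDivisors_iff.mp hreg).1 _ hprod)

variable {R A : Type*} [CommRing R] [BinomialRing R] [CommRing A] [Algebra R A]

/-- The formal power `(1 + G) ^ q`, for the binomial expansion with a rational exponent,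
obtained by substituting `G` in the binomial series. It is a junk value unless the constant
coefficient of `G` is nilpotent. -/
noncomputable def oneAddPow (q : R) (G : A⟦X⟧) : A⟦X⟧ :=
  (binomialSeries A q).subst G

variable {G : A⟦X⟧}

lemma coeff_oneAddPow (hG : constantCoeff G = 0) (q : R) (n : ℕ) :
    coeff n (oneAddPow q G) = ∑ᶠ d, Ring.choose q d • coeff n (G ^ d) := by
  simp only [oneAddPow, coeff_subst' (.of_constantCoeff_zero' hG), binomialSeries_coeff,
    smul_assoc, one_smul]

lemma constantCoeff_oneAddPow (hG : constantCoeff G = 0) (q : R) :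
    constantCoeff (oneAddPow q G) = 1 := by
  rw [← coeff_zero_eq_constantCoeff_apply, coeff_oneAddPow hG, finsum_eq_single _ 0]
  · simp
  · intro d hd
    simp [hG, hd]

lemma oneAddPow_natCast (hG : constantCoeff G = 0) (k : ℕ) :
    oneAddPow (k : R) G = (1 + G) ^ k := by
  have hs : HasSubst G := .of_constantCoeff_zero' hG
  rw [oneAddPow, binomialSeries_nat, ← coe_substAlgHom hs, map_pow, map_add, map_one,
    substAlgHom_X]

lemma oneAddPow_nsmul (hG : constantCoeff G = 0) (r : ℕ) (q : R) :
    oneAddPow (r • q) G = oneAddPow q G ^ r := by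
  have hs : HasSubst G := .of_constantCoeff_zero' hG
  induction r with
  | zero => simpa using oneAddPow_natCast (R := R) hG 0
  | succ r ih =>
    rw [succ_nsmul, pow_succ, ← ih]
    simp only [oneAddPow, binomialSeries_add, subst_mul hs]

lemma subst_oneAddPow (hG : constantCoeff G = 0) {a : A⟦X⟧} (ha : HasSubst a) (q : R) :
    (oneAddPow q G).subst a = oneAddPow q (G.subst a) :=
  subst_comp_subst_apply (.of_constantCoeff_zero' hG) ha _

lemma oneAddPow_div_eq_pow [Algebra ℚ A] {V : A⟦X⟧} (hG : constantCoeff G = 0)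
    (hV : constantCoeff V = 1) {r : ℕ} (hr : r ≠ 0) (h : V ^ r = 1 + G) (k : ℕ) :
    oneAddPow ((k : ℚ) / r) G = V ^ k := by
  have : IsAddTorsionFree A := .of_module_rat A
  refine eq_of_pow_eq_pow_of_constantCoeff_eq_one (constantCoeff_oneAddPow hG _)
    (by simp [hV]) hr ?_
  rw [← oneAddPow_nsmul hG, nsmul_eq_mul, mul_div_cancel₀ _ (Nat.cast_ne_zero.mpr hr),
    oneAddPow_natCast hG, ← h, ← pow_mul, ← pow_mul, mul_comm]

end OneAddPow

section Multinomial

variable {ι : Type*} [Fintype ι]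

lemma constantCoeff_sum_C_mul_X_pow {A : Type*} [CommSemiring A] (s : ι → A) {w : ι → ℕ}
    (hw : ∀ i, w i ≠ 0) : constantCoeff (∑ i, C (s i) * X ^ w i) = 0 := by
  simp [hw]

lemma subst_sum_C_mul_X_pow {A : Type*} [CommRing A] (s : ι → A) (w : ι → ℕ) {a : A⟦X⟧}
    (ha : HasSubst a) :
    (∑ i, C (s i) * X ^ w i : A⟦X⟧).subst a = ∑ i, C (s i) * a ^ w i := by
  simp only [← coe_substAlgHom ha, map_sum, map_mul, map_pow, substAlgHom_X]
  simp only [coe_substAlgHom, subst_C]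
  rfl

variable [DecidableEq ι]

lemma coeff_sum_C_mul_X_pow_pow {A : Type*} [CommSemiring A] (s : ι → A) {w : ι → ℕ}
    (hw : ∀ i, w i ≠ 0) (N d : ℕ) :
    coeff N ((∑ i, C (s i) * X ^ w i) ^ d) =
      ∑ n ∈ tuplesOfWeight w N with ∑ i, n i = d,
        (Nat.multinomial Finset.univ n : A) * ∏ i, s i ^ n i := by
  have hterm (n : ι → ℕ) :
      (Nat.multinomial Finset.univ n : A⟦X⟧) * ∏ i, (C (s i) * X ^ w i) ^ n i =
        C ((Nat.multinomial Finset.univ n : A) * ∏ i, s i ^ n i) * X ^ ∑ i, w i * n i := by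
    simp only [mul_pow, Finset.prod_mul_distrib, ← pow_mul, Finset.prod_pow_eq_pow_sum, map_mul,
      map_natCast, map_prod, map_pow, mul_assoc]
  have hindex : ((Finset.univ : Finset ι).piAntidiag d).filter (fun n ↦ N = ∑ i, w i * n i) =
      (tuplesOfWeight w N).filter fun n ↦ ∑ i, n i = d := by
    ext n
    simp [mem_tuplesOfWeight hw, and_comm, eq_comm]
  simp only [Finset.sum_pow_eq_sum_piAntidiag, hterm, map_sum, coeff_C_mul_X_pow]
  rw [← Finset.sum_filter, hindex]

lemma coeff_oneAddPow_sum_C_mul_X_pow {R A : Type*} [CommRing R] [BinomialRing R] [CommRing A]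
    [Algebra R A] (s : ι → A) {w : ι → ℕ} (hw : ∀ i, w i ≠ 0) (q : R) (N : ℕ) :
    coeff N (oneAddPow q (∑ i, C (s i) * X ^ w i)) =
      ∑ n ∈ tuplesOfWeight w N, Ring.choose q (∑ i, n i) •
        ((Nat.multinomial Finset.univ n : A) * ∏ i, s i ^ n i) := by
  rw [coeff_oneAddPow (constantCoeff_sum_C_mul_X_pow s hw)]
  simp only [coeff_sum_C_mul_X_pow_pow s hw, Finset.smul_sum]
  exact finsum_sum_filter_eq _ (fun n : ι → ℕ ↦ ∑ i, n i) fun d n ↦ Ring.choose q d • _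

end Multinomial

theorem natCast_mul_coeff_succ_eq_neg_sum_of_pow_eq {A ι : Type*} [CommRing A] [Algebra ℚ A]
    [Fintype ι] [DecidableEq ι] (s : ι → A) {w : ι → ℕ} (hw : ∀ i, w i ≠ 0) {U V : A⟦X⟧}
    (hUV : U * V = 1) (hV : constantCoeff V = 1) {r : ℕ} (hr : r ≠ 0)
    (h : V ^ r = 1 + ∑ i, C (s i) * (X * V) ^ w i) (k : ℕ) :
    (k : A) * coeff (k + 1) U =
      -∑ n ∈ tuplesOfWeight w (k + 1), Ring.choose ((k : ℚ) / r) (∑ i, n i) •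
        ((Nat.multinomial Finset.univ n : A) * ∏ i, s i ^ n i) := by
  have : IsAddTorsionFree A := .of_module_rat A
  have hXV : HasSubst (X * V) := .of_constantCoeff_zero' (by simp)
  have hVk : (oneAddPow ((k : ℚ) / r) (∑ i, C (s i) * X ^ w i)).subst (X * V) = V ^ k := by
    rw [subst_oneAddPow (constantCoeff_sum_C_mul_X_pow s hw) hXV, subst_sum_C_mul_X_pow s w hXV]
    exact oneAddPow_div_eq_pow (by simp [hw]) hV hr h k
  rw [lagrange_inversion_reciprocal hUV hVk, coeff_oneAddPow_sum_C_mul_X_pow s hw]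

end PowerSeries

section LaurentSeries

lemma eq_single_mul_ofPowerSeries_of_coeff_eq_zero {A : Type*} [Semiring A] (P : LaurentSeries A)
    {m : ℤ} (hlow : ∀ n < m, P.coeff n = 0) :
    P = HahnSeries.single m 1 *
      HahnSeries.ofPowerSeries ℤ A (PowerSeries.mk fun n ↦ P.coeff (n + m)) := by
  ext n
  rw [← sub_add_cancel n m, HahnSeries.coeff_single_mul_add, one_mul, PowerSeries.coeff_coe]
  split_ifs with hn
  · exact hlow _ (by lia)
  · rw [PowerSeries.coeff_mk]
    congr 1
    lia

lemma mul_pow_eq_one_add_sum_of_mul_eq_one {B ι : Type*} [CommSemiring B] [Fintype ι] {r : ℕ}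
    (s : ι → B) {e w : ι → ℕ} (hew : ∀ i, e i + w i = r) {p q y : B} (hpq : p * q = 1)
    (h : p ^ r + ∑ i, s i * p ^ e i = y) : y * q ^ r = 1 + ∑ i, s i * q ^ w i := by
  rw [← h, add_mul, Finset.sum_mul, ← mul_pow, hpq, one_pow]
  congr 1
  refine Finset.sum_congr rfl fun i _ ↦ ?_
  rw [← hew i, pow_add, mul_assoc, ← mul_assoc (p ^ e i), ← mul_pow, hpq, one_pow, one_mul]

lemma pow_eq_one_add_sum_of_single_mul_ofPowerSeries {A ι : Type*} [CommSemiring A] [Fintype ι]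
    {r : ℕ} (s : ι → A) {e w : ι → ℕ} (hew : ∀ i, e i + w i = r) {U V : PowerSeries A}
    (hUV : U * V = 1) {P : LaurentSeries A}
    (hPU : P = HahnSeries.single (-1) 1 * HahnSeries.ofPowerSeries ℤ A U)
    (hP : P ^ r + ∑ i, HahnSeries.C (s i) * P ^ e i = HahnSeries.single (-(r : ℤ)) 1) :
    V ^ r = 1 + ∑ i, PowerSeries.C (s i) * (PowerSeries.X * V) ^ w i := by
  have hPq : P * HahnSeries.ofPowerSeries ℤ A (PowerSeries.X * V) = 1 := by
    rw [hPU, map_mul, mul_mul_mul_comm, ← map_mul _ U, hUV, HahnSeries.ofPowerSeries_X,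
      HahnSeries.single_mul_single]
    simp
  have hVr : HahnSeries.single (-(r : ℤ)) 1 * HahnSeries.ofPowerSeries ℤ A (PowerSeries.X * V) ^ r =
      HahnSeries.ofPowerSeries ℤ A (V ^ r) := by
    rw [map_mul, mul_pow, ← mul_assoc, HahnSeries.ofPowerSeries_X, HahnSeries.single_pow,
      HahnSeries.single_mul_single, map_pow]
    simp
  apply HahnSeries.ofPowerSeries_injective (Γ := ℤ)
  rw [← hVr, mul_pow_eq_one_add_sum_of_mul_eq_one _ hew hPq hP]
  simp only [map_add, map_one, map_sum, map_mul, map_pow, HahnSeries.ofPowerSeries_C]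

end LaurentSeries

theorem stmt13_general {A ι : Type*} [CommRing A] [Algebra ℚ A] [Fintype ι] [DecidableEq ι]
    {r : ℕ} (hr : r ≠ 0) (s : ι → A) {e w : ι → ℕ} (hew : ∀ i, e i + w i = r)
    (hw : ∀ i, w i ≠ 0) {P : LaurentSeries A} (hlead : P.coeff (-1) = 1)
    (hlow : ∀ n < -1, P.coeff n = 0)
    (hP : P ^ r + ∑ i, HahnSeries.C (s i) * P ^ e i = HahnSeries.single (-(r : ℤ)) 1) (k : ℕ) :
    (k : A) * P.coeff k =
      -∑ n ∈ tuplesOfWeight w (k + 1), qbinom ((k : ℚ) / r) (∑ i, n i) •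
        ((Nat.multinomial Finset.univ n : A) * ∏ i, s i ^ n i) := by
  have hPU := eq_single_mul_ofPowerSeries_of_coeff_eq_zero P hlow
  set U : PowerSeries A := PowerSeries.mk fun n ↦ P.coeff (n + -1)
  have hU : PowerSeries.constantCoeff U = 1 := by
    simpa [U, ← PowerSeries.coeff_zero_eq_constantCoeff_apply] using hlead
  obtain ⟨V, hUV⟩ := (PowerSeries.isUnit_iff_constantCoeff.mpr (hU ▸ isUnit_one)).exists_right_inv
  have hV : PowerSeries.constantCoeff V = 1 := by
    simpa [hU] using congrArg PowerSeries.constantCoeff hUV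
  have hk : PowerSeries.coeff (k + 1) U = P.coeff k := by simp [U]
  simp only [← hk, qbinom_eq_choose]
  exact natCast_mul_coeff_succ_eq_neg_sum_of_pow_eq s hw hUV hV hr
    (pow_eq_one_add_sum_of_single_mul_ofPowerSeries s hew hUV hPU hP) k

/-- Let `r ≥ 1` and `λ(p;s) = p^r + Σ_{i=1}^{r-1} s_i p^{r-1-i}`, with the `s_i` formal
variables.  Let `p(ξ;s) = ξ + Σ_{k≥1} u_k(s) ξ^{-k}` be the unique formal solution of
`λ(p;s) = ξ^r` (encoded as a Laurent series `P` in the variable `η = ξ⁻¹`, so that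
`u_k(s) = P.coeff k`).  Then for every `k ≥ 1`,
`k·u_k(s) = - Σ_{n₁,…,n_{r-1} ≥ 0, 2n₁+3n₂+⋯+r·n_{r-1} = k+1}
   binom(k/r, Σᵢ nᵢ)·multinomial(Σᵢ nᵢ; n₁,…,n_{r-1})·s₁^{n₁}⋯s_{r-1}^{n_{r-1}}`. -/
theorem stmt13 (r : ℕ) (hr : 1 ≤ r)
    (P : LaurentSeries (MvPolynomial (Fin (r - 1)) ℚ))
    (hlead : P.coeff (-1) = 1)
    (hzero : P.coeff 0 = 0)
    (hlow : ∀ n : ℤ, n < -1 → P.coeff n = 0)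
    (hP : P ^ r + ∑ i : Fin (r - 1),
            HahnSeries.C (MvPolynomial.X i) * P ^ (r - 2 - (i : ℕ))
          = HahnSeries.single (-(r : ℤ)) (1 : MvPolynomial (Fin (r - 1)) ℚ)) :
    ∀ k : ℕ, 1 ≤ k →
      (k : MvPolynomial (Fin (r - 1)) ℚ) * P.coeff (k : ℤ)
        = - ∑ n ∈ (Fintype.piFinset fun _ : Fin (r - 1) => Finset.range (k + 2)).filter
              (fun n => ∑ i : Fin (r - 1), ((i : ℕ) + 2) * n i = k + 1),
            qbinom ((k : ℚ) / (r : ℚ)) (∑ i : Fin (r - 1), n i) •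
              ((Nat.multinomial Finset.univ n : MvPolynomial (Fin (r - 1)) ℚ) *
                ∏ i : Fin (r - 1), (MvPolynomial.X i : MvPolynomial (Fin (r - 1)) ℚ) ^ (n i)) := by
  exact fun k _ ↦ stmt13_general (Nat.one_le_iff_ne_zero.mp hr) MvPolynomial.X
    (fun i ↦ by lia) (fun _ ↦ Nat.succ_ne_zero _) hlead hlow hP k
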